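/- Let L be a residuated lattice, E_L the disjoint union over P ∈ Spec(L) of the quotients L/O(P), equipped with the topology T(B) generated by the base B = {D(F, a) : F a filter of L, a ∈ L}, where D(F, a) = {a_P : P ∈ D(F)}, and let Spec(L) carry the Stone topology. Then for any a ∈ L, the function â : Spec(L) → E_L defined by â(P) = a_P is continuous and satisfies π(â(P)) = P for all P, where π : E_L → Spec(L) is the canonical projection a_P ↦ P. -/

import Mathlib

/-!
Since `P` is prime, `O(P)` is a filter, so `a_P = b_P` exactly when the biresiduum
`(a → b) ⊗ (b → a)` lies in `O(P)`. By the definition of `O(P)`, the prime filters `P` with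
`x ∈ O(P)` are those not containing the coannihilator `{c | c ∨ x = 1}` of `x`, and hence form a
Stone open set. The preimage of `D(F, b)` under `P ↦ a_P` is therefore the intersection of two
Stone open sets.
-/

/-- A residuated lattice: a bounded lattice with a commutative monoid
operation `mul` whose identity is the top element, and a residuum `himp`
satisfying `mul x y ≤ z ↔ x ≤ himp y z`. Here `⊤` plays the role of `1`
and `⊥` the role of `0`. -/
class ResiduatedLattice (L : Type*) extends Lattice L, BoundedOrder L where
  mul : L → L → L
  himp : L → L → L
  mul_comm : ∀ x y : L, mul x y = mul y x
  mul_assoc : ∀ x y z : L, mul (mul x y) z = mul x (mul y z)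
  mul_top : ∀ x : L, mul x ⊤ = x
  residuation : ∀ x y z : L, mul x y ≤ z ↔ x ≤ himp y z

namespace ResiduatedLattice

variable {L : Type*} [ResiduatedLattice L]

/-- A filter of a residuated lattice: a nonempty, upward closed subset
closed under `mul`. -/
def IsFilter (F : Set L) : Prop :=
  F.Nonempty ∧ (∀ x y : L, x ∈ F → x ≤ y → y ∈ F) ∧
    ∀ x y : L, x ∈ F → y ∈ F → mul x y ∈ F

/-- A prime filter: a proper filter such that `x ⊔ y ∈ P` implies
`x ∈ P` or `y ∈ P`. -/
def IsPrimeFilter (P : Set L) : Prop :=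
  IsFilter P ∧ P ≠ Set.univ ∧ ∀ x y : L, x ⊔ y ∈ P → x ∈ P ∨ y ∈ P

/-- `filterGen X` is the smallest filter containing `X`. -/
def filterGen (X : Set L) : Set L := ⋂₀ {F : Set L | IsFilter F ∧ X ⊆ F}

/-- The prime spectrum: the set of all prime filters. -/
def Spectrum (L : Type*) [ResiduatedLattice L] := {P : Set L // IsPrimeFilter P}

/-- `D X = {P ∈ Spec L | X ⊄ P}`. -/
def D (X : Set L) : Set (Spectrum L) := {P : Spectrum L | ¬ X ⊆ P.1}

/-- `O P = {x | a ⊔ x = 1 for some a ∉ P}`. -/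
def O (P : Set L) : Set L := {x : L | ∃ a ∉ P, a ⊔ x = ⊤}

/-- The congruence relation associated to a filter `F`:
`x ≡_F y` iff `(x → y) ⊗ (y → x) ∈ F`. -/
def rel (F : Set L) (x y : L) : Prop := mul (himp x y) (himp y x) ∈ F

end ResiduatedLattice

namespace ResiduatedLattice

variable {L : Type*} [ResiduatedLattice L]

/-- The family of sets of the form `D X`, the open sets of the Stone topology. -/
def stoneOpens (L : Type*) [ResiduatedLattice L] : Set (Set (Spectrum L)) :=
  {U : Set (Spectrum L) | ∃ X : Set L, U = D X}

/-- The Stone topology on `Spec(L)`, whose open sets are exactly the `D X`. -/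
instance : TopologicalSpace (Spectrum L) :=
  TopologicalSpace.generateFrom (stoneOpens L)

/-- The total space `E_L`: the disjoint union over `P ∈ Spec(L)` of the
quotients `L/O(P)` (quotient by the relation `x ≡ y` iff
`(x → y) ⊗ (y → x) ∈ O(P)`). -/
def EL (L : Type*) [ResiduatedLattice L] :=
  (P : Spectrum L) × Quot (rel (O P.1))

/-- `a_P`, the class of `a` in the stalk `L/O(P)`, viewed in `E_L`. -/
def stalkMk (P : Spectrum L) (a : L) : EL L := ⟨P, Quot.mk _ a⟩

/-- The canonical projection `π : E_L → Spec(L)`, `a_P ↦ P`. -/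
def proj (L : Type*) [ResiduatedLattice L] : EL L → Spectrum L := fun e => e.1

/-- `D(F, a) = {a_P : P ∈ D(F)}`. -/
def DFa (F : Set L) (a : L) : Set (EL L) :=
  {e : EL L | ∃ P ∈ D F, e = stalkMk P a}

/-- The base `B = {D(F, a) : F a filter of L, a ∈ L}` for the topology on `E_L`. -/
def ELBase (L : Type*) [ResiduatedLattice L] : Set (Set (EL L)) :=
  {S : Set (EL L) | ∃ (F : Set L) (a : L), IsFilter F ∧ S = DFa F a}

/-- The topology `T(B)` on `E_L` generated by the base `B`. -/
instance : TopologicalSpace (EL L) :=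
  TopologicalSpace.generateFrom (ELBase L)

end ResiduatedLattice

namespace ResiduatedLattice

section Order

variable {L : Type*} [ResiduatedLattice L]

theorem gc_mul_himp (y : L) : GaloisConnection (mul · y) (himp y) :=
  fun x z => residuation x y z

theorem top_mul (x : L) : mul ⊤ x = x := by
  rw [mul_comm, mul_top]

theorem mul_le_right (x y : L) : mul x y ≤ y :=
  calc mul x y ≤ mul ⊤ y := (gc_mul_himp y).monotone_l le_top
    _ = y := top_mul y

theorem mul_le_left (x y : L) : mul x y ≤ x :=
  mul_comm x y ▸ mul_le_right y x

theorem sup_mul (x y z : L) : mul (x ⊔ y) z = mul x z ⊔ mul y z :=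
  (gc_mul_himp z).l_sup

theorem sup_mul_sup_le (c x y : L) : mul (c ⊔ x) (c ⊔ y) ≤ c ⊔ mul x y :=
  calc mul (c ⊔ x) (c ⊔ y) = mul c (c ⊔ y) ⊔ (mul c x ⊔ mul y x) := by
        rw [sup_mul, mul_comm x (c ⊔ y), sup_mul]
    _ ≤ c ⊔ (c ⊔ mul x y) :=
        sup_le_sup (mul_le_left _ _) (sup_le_sup (mul_le_left _ _) (mul_comm y x).le)
    _ = c ⊔ mul x y := by rw [← sup_assoc, sup_idem]

theorem himp_self (x : L) : himp x x = ⊤ :=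
  top_le_iff.1 ((residuation ⊤ x x).1 (top_mul x).le)

theorem himp_mul_himp_le (x y z : L) : mul (himp x y) (himp y z) ≤ himp x z := by
  rw [← residuation]
  calc mul (mul (himp x y) (himp y z)) x = mul (mul (himp x y) x) (himp y z) := by
        rw [mul_assoc, mul_comm (himp y z), ← mul_assoc]
    _ ≤ mul y (himp y z) :=
        (gc_mul_himp (himp y z)).monotone_l ((gc_mul_himp x).l_u_le y)
    _ = mul (himp y z) y := mul_comm _ _
    _ ≤ z := (gc_mul_himp y).l_u_le z

end Order

section Filter

variable {L : Type*} [ResiduatedLattice L] {F P : Set L}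

theorem IsFilter.top_mem (hF : IsFilter F) : ⊤ ∈ F :=
  let ⟨x, hx⟩ := hF.1
  hF.2.1 x ⊤ hx le_top

theorem IsFilter.mul_mem_iff (hF : IsFilter F) {x y : L} : mul x y ∈ F ↔ x ∈ F ∧ y ∈ F :=
  ⟨fun h => ⟨hF.2.1 _ _ h (mul_le_left x y), hF.2.1 _ _ h (mul_le_right x y)⟩,
    fun h => hF.2.2 x y h.1 h.2⟩

theorem IsFilter.himp_mem_trans (hF : IsFilter F) {x y z : L} (hxy : himp x y ∈ F)
    (hyz : himp y z ∈ F) : himp x z ∈ F :=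
  hF.2.1 _ _ (hF.2.2 _ _ hxy hyz) (himp_mul_himp_le x y z)

theorem IsFilter.rel_iff (hF : IsFilter F) {x y : L} :
    rel F x y ↔ himp x y ∈ F ∧ himp y x ∈ F :=
  hF.mul_mem_iff

theorem IsFilter.equivalence_rel (hF : IsFilter F) : Equivalence (rel F) where
  refl x := by
    rw [hF.rel_iff, himp_self]
    exact ⟨hF.top_mem, hF.top_mem⟩
  symm h := hF.rel_iff.2 (hF.rel_iff.1 h).symm
  trans hxy hyz := by
    obtain ⟨hxy, hyx⟩ := hF.rel_iff.1 hxy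
    obtain ⟨hyz, hzy⟩ := hF.rel_iff.1 hyz
    exact hF.rel_iff.2 ⟨hF.himp_mem_trans hxy hyz, hF.himp_mem_trans hzy hyx⟩

theorem IsPrimeFilter.isFilter_O (hP : IsPrimeFilter P) : IsFilter (O P) := by
  obtain ⟨-, hproper, hprime⟩ := hP
  refine ⟨?_, ?_, ?_⟩
  · obtain ⟨c, hc⟩ := (Set.ne_univ_iff_exists_notMem P).1 hproper
    exact ⟨⊤, c, hc, sup_top_eq c⟩
  · rintro x y ⟨c, hc, hcx⟩ hxy
    exact ⟨c, hc, top_le_iff.1 (hcx ▸ sup_le_sup_left hxy c)⟩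
  · rintro x y ⟨c, hc, hcx⟩ ⟨d, hd, hdy⟩
    have hcd : c ⊔ d ∉ P := fun h => (hprime c d h).elim hc hd
    have hx : c ⊔ d ⊔ x = ⊤ := by rw [sup_right_comm, hcx, top_sup_eq]
    have hy : c ⊔ d ⊔ y = ⊤ := by rw [sup_assoc, hdy, sup_top_eq]
    refine ⟨c ⊔ d, hcd, top_le_iff.1 ?_⟩
    calc ⊤ = mul (c ⊔ d ⊔ x) (c ⊔ d ⊔ y) := by rw [hx, hy, mul_top]
      _ ≤ c ⊔ d ⊔ mul x y := sup_mul_sup_le _ _ _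

end Filter

section Topology

variable {L : Type*} [ResiduatedLattice L]

theorem isOpen_D (X : Set L) : IsOpen (D X) :=
  TopologicalSpace.isOpen_generateFrom_of_mem ⟨X, rfl⟩

theorem setOf_mem_O_eq_D (x : L) :
    {P : Spectrum L | x ∈ O P.1} = D {c | c ⊔ x = ⊤} := by
  ext P
  simp only [O, D, Set.mem_ofPred_eq, Set.not_subset, and_comm]

theorem isOpen_setOf_rel_O (a b : L) : IsOpen {P : Spectrum L | rel (O P.1) a b} :=
  setOf_mem_O_eq_D (mul (himp a b) (himp b a)) ▸ isOpen_D _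

theorem stalkMk_eq_iff {P Q : Spectrum L} {a b : L} :
    stalkMk P a = stalkMk Q b ↔ P = Q ∧ rel (O P.1) a b := by
  have hrel : Equivalence (rel (O P.1)) := P.2.isFilter_O.equivalence_rel
  constructor
  · intro h
    obtain rfl : P = Q := congrArg (proj L) h
    exact ⟨rfl, hrel.quot_mk_eq_iff a b |>.1 (eq_of_heq (Sigma.mk.inj h).2)⟩
  · rintro ⟨rfl, h⟩
    exact congrArg (Sigma.mk P) (Quot.sound h)

theorem preimage_stalkMk_DFa (F : Set L) (a b : L) :
    (fun P : Spectrum L => stalkMk P a) ⁻¹' DFa F b =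
      D F ∩ {P | rel (O P.1) a b} := by
  ext P
  simp [DFa, stalkMk_eq_iff]

end Topology

/-- for any `a ∈ L`, the map `â : Spec(L) → E_L`,
`P ↦ a_P`, is continuous and is a section of `π`. -/
theorem section_continuous (L : Type*) [ResiduatedLattice L] (a : L) :
    Continuous (fun P : Spectrum L => stalkMk P a) ∧
      ∀ P : Spectrum L, proj L (stalkMk P a) = P := by
  refine ⟨continuous_generateFrom_iff.2 ?_, fun _ => rfl⟩
  rintro _ ⟨F, b, -, rfl⟩
  rw [preimage_stalkMk_DFa]
  exact (isOpen_D F).inter (isOpen_setOf_rel_O a b)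

end ResiduatedLattice
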